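/- Let s > 0, x ∈ ℝ², let S, S′ ⊆ ℝ² be nonempty sets, let ω ⊂ ℝ² be a finite configuration, and let d ≥ 0 be such that for every z ∈ S there exists y ∈ S′ with |z − y| ≤ d. Then for every admissible sequence (x₀, x₁, …, x_{N+1}) for A^s_ω(x, S), with N configuration points and length L, one has A^s_ω(x, S′) ≤ (L + d)²/(2s) − N. In particular, if the infimum A^s_ω(x, S) is attained by a minimizer of length L, then A^s_ω(x, S′) ≤ A^s_ω(x, S) + (2Ld + d²)/(2s). -/

import Mathlib

/-!
Redirecting only the last step of an admissible sequence, from its endpoint `z ∈ S` to a point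
`y ∈ S'` with `dist z y ≤ d`, keeps its configuration points and lengthens it by at most `d`.
The action of the new sequence bounds the infimum for `S'`, since a sequence visiting distinct
points of a finite configuration has action at least minus the number of these points.
-/

noncomputable section

/-- Points of the plane. -/
abbrev Pt := EuclideanSpace ℝ (Fin 2)

noncomputable instance : DecidableEq Pt := Classical.decEq _

/-- An admissible sequence for the configuration `cfg`, start `x` and target set `S`:
`p 0 = x`, `p (N+1) ∈ S`, and the interior points `p 1, …, p N` are pairwise distinct
points of `cfg`. -/
def IsAdmissible (cfg : Finset Pt) (x : Pt) (S : Set Pt) (N : ℕ)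
    (p : Fin (N + 2) → Pt) : Prop :=
  p 0 = x ∧ p (Fin.last (N + 1)) ∈ S ∧
    (∀ i : Fin (N + 2), i ≠ 0 → i ≠ Fin.last (N + 1) → p i ∈ cfg) ∧
    (∀ i j : Fin (N + 2), i ≠ 0 → i ≠ Fin.last (N + 1) → j ≠ 0 → j ≠ Fin.last (N + 1) →
      i ≠ j → p i ≠ p j)

/-- The length `L` of the polygonal path through `p 0, …, p (N+1)`. -/
def pathLength (N : ℕ) (p : Fin (N + 2) → Pt) : ℝ :=
  ∑ i : Fin (N + 1), ‖p i.succ - p i.castSucc‖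

/-- The action `L²/(2s) − N` of an admissible sequence. -/
def pathAction (s : ℝ) (N : ℕ) (p : Fin (N + 2) → Pt) : ℝ :=
  pathLength N p ^ 2 / (2 * s) - N

/-- The action `A^s_ω(x, S)`: the infimum of the action over admissible sequences. -/
def actionInf (cfg : Finset Pt) (s : ℝ) (x : Pt) (S : Set Pt) : ℝ :=
  sInf {a : ℝ | ∃ (N : ℕ) (p : Fin (N + 2) → Pt), IsAdmissible cfg x S N p ∧
    a = pathAction s N p}

/-- Admissible sequences for the point-to-set action from `x` to `S`. The interior points
`p 1, …, p N` are the values of `p` at `i.succ.castSucc` for `i : Fin N`. -/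
structure IsAdmissibleSeq {X : Type*} {N : ℕ} (ω : Finset X) (x : X) (S : Set X)
    (p : Fin (N + 2) → X) : Prop where
  zero_eq : p 0 = x
  last_mem : p (Fin.last (N + 1)) ∈ S
  interior_mem : ∀ i : Fin N, p i.succ.castSucc ∈ ω
  interior_injective : Function.Injective fun i : Fin N => p i.succ.castSucc

namespace IsAdmissibleSeq

variable {X : Type*} {N : ℕ} {ω : Finset X} {x : X} {S S' : Set X} {p : Fin (N + 2) → X}

theorem update_last (hp : IsAdmissibleSeq ω x S p) {y : X} (hy : y ∈ S') :
    IsAdmissibleSeq ω x S' (Function.update p (Fin.last (N + 1)) y) where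
  zero_eq := by rw [Function.update_of_ne Fin.last_pos.ne, hp.zero_eq]
  last_mem := by rwa [Function.update_self]
  interior_mem i := by
    rw [Function.update_of_ne (Fin.castSucc_ne_last _)]
    exact hp.interior_mem i
  interior_injective := by
    simpa only [ne_eq, Fin.castSucc_ne_last, not_false_eq_true, Function.update_of_ne]
      using hp.interior_injective

theorem le_card (hp : IsAdmissibleSeq ω x S p) : N ≤ ω.card := by
  simpa only [Finset.card_univ, Fintype.card_fin] using
    Finset.card_le_card_of_injOn (s := Finset.univ) _ (fun i _ => hp.interior_mem i)
      hp.interior_injective.injOn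

end IsAdmissibleSeq

section PseudoMetricSpace

variable {X : Type*} [PseudoMetricSpace X] {N : ℕ}

/-- The length of the polygonal chain through the points `p 0, …, p n` of a pseudometric space. -/
def chainLength {n : ℕ} (p : Fin (n + 1) → X) : ℝ :=
  ∑ i : Fin n, dist (p i.castSucc) (p i.succ)

/-- The action `L²/(2s) − N` of a sequence of length `L` with `N` interior points. -/
def chainAction (s : ℝ) (p : Fin (N + 2) → X) : ℝ :=
  chainLength p ^ 2 / (2 * s) - N

/-- The set of actions of admissible sequences from `x` to `S`, with any number of interior
points. -/
def admissibleActions (ω : Finset X) (s : ℝ) (x : X) (S : Set X) : Set ℝ :=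
  {a | ∃ (N : ℕ) (p : Fin (N + 2) → X), IsAdmissibleSeq ω x S p ∧ a = chainAction s p}

theorem chainLength_nonneg {n : ℕ} (p : Fin (n + 1) → X) : 0 ≤ chainLength p :=
  Finset.sum_nonneg fun _ _ => dist_nonneg

theorem chainLength_eq_init_add_dist {n : ℕ} (p : Fin (n + 2) → X) :
    chainLength p = chainLength (Fin.init p) +
      dist (p (Fin.last n).castSucc) (p (Fin.last (n + 1))) :=
  Fin.sum_univ_castSucc _

theorem chainLength_update_last_le {n : ℕ} (p : Fin (n + 2) → X) (y : X) :
    chainLength (Function.update p (Fin.last (n + 1)) y) ≤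
      chainLength p + dist (p (Fin.last (n + 1))) y := by
  have triangle := dist_triangle (p (Fin.last n).castSucc) (p (Fin.last (n + 1))) y
  rw [chainLength_eq_init_add_dist, chainLength_eq_init_add_dist p, Fin.init_update_last,
    Function.update_self, Function.update_of_ne (Fin.castSucc_ne_last _)]
  linarith

theorem bddBelow_admissibleActions (ω : Finset X) {s : ℝ} (hs : 0 < s) (x : X) (S : Set X) :
    BddBelow (admissibleActions ω s x S) := by
  refine ⟨-(ω.card : ℝ), ?_⟩
  rintro _ ⟨N, p, hp, rfl⟩
  have card_bound : (N : ℝ) ≤ ω.card := Nat.cast_le.mpr hp.le_card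
  have kinetic_nonneg : 0 ≤ chainLength p ^ 2 / (2 * s) := by positivity
  unfold chainAction
  linarith

theorem sInf_admissibleActions_le_of_mem {ω : Finset X} {s : ℝ} (hs : 0 < s) {x : X}
    {S S' : Set X} {p : Fin (N + 2) → X} (hp : IsAdmissibleSeq ω x S p) {y : X} (hy : y ∈ S') :
    sInf (admissibleActions ω s x S') ≤
      (chainLength p + dist (p (Fin.last (N + 1))) y) ^ 2 / (2 * s) - N :=
  calc sInf (admissibleActions ω s x S')
    _ ≤ chainAction s (Function.update p (Fin.last (N + 1)) y) :=
      csInf_le (bddBelow_admissibleActions ω hs x S') ⟨N, _, hp.update_last hy, rfl⟩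
    _ ≤ (chainLength p + dist (p (Fin.last (N + 1))) y) ^ 2 / (2 * s) - N := by
      unfold chainAction
      gcongr
      · exact chainLength_nonneg _
      · exact chainLength_update_last_le p y

theorem action_target_stability_general {ω : Finset X} {s : ℝ} (hs : 0 < s) {x : X}
    {S S' : Set X} {d : ℝ} (hclose : ∀ z ∈ S, ∃ y ∈ S', dist z y ≤ d) :
    (∀ (N : ℕ) (p : Fin (N + 2) → X), IsAdmissibleSeq ω x S p →
      sInf (admissibleActions ω s x S') ≤ (chainLength p + d) ^ 2 / (2 * s) - N) ∧
    (∀ (N : ℕ) (p : Fin (N + 2) → X), IsAdmissibleSeq ω x S p →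
      chainAction s p = sInf (admissibleActions ω s x S) →
      sInf (admissibleActions ω s x S') ≤ sInf (admissibleActions ω s x S) +
        (2 * chainLength p * d + d ^ 2) / (2 * s)) := by
  have bound (N : ℕ) (p : Fin (N + 2) → X) (hp : IsAdmissibleSeq ω x S p) :
      sInf (admissibleActions ω s x S') ≤ (chainLength p + d) ^ 2 / (2 * s) - N := by
    obtain ⟨y, hy, hyd⟩ := hclose _ hp.last_mem
    have length_nonneg := chainLength_nonneg p
    exact (sInf_admissibleActions_le_of_mem hs hp hy).trans (by gcongr)
  refine ⟨bound, fun N p hp minimizer => (bound N p hp).trans_eq ?_⟩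
  rw [← minimizer, chainAction]
  ring

end PseudoMetricSpace

theorem forall_ne_zero_ne_last_iff {N : ℕ} {P : Fin (N + 2) → Prop} :
    (∀ i, i ≠ 0 → i ≠ Fin.last (N + 1) → P i) ↔ ∀ i : Fin N, P i.succ.castSucc := by
  refine ⟨fun h i => h _ ?_ (Fin.castSucc_ne_last _), fun h i h_zero h_last => ?_⟩
  · exact Fin.castSucc_ne_zero_iff.mpr (Fin.succ_ne_zero i)
  · obtain ⟨j, rfl⟩ := Fin.exists_castSucc_eq.mpr h_last
    obtain ⟨k, rfl⟩ := Fin.exists_succ_eq.mpr (Fin.castSucc_ne_zero_iff.mp h_zero)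
    exact h k

theorem isAdmissible_iff {cfg : Finset Pt} {x : Pt} {S : Set Pt} {N : ℕ}
    {p : Fin (N + 2) → Pt} : IsAdmissible cfg x S N p ↔ IsAdmissibleSeq cfg x S p := by
  have distinct_iff_injective :
      (∀ i j, i ≠ 0 → i ≠ Fin.last (N + 1) → j ≠ 0 → j ≠ Fin.last (N + 1) → i ≠ j → p i ≠ p j) ↔
        Function.Injective fun i : Fin N => p i.succ.castSucc :=
    calc
      _ ↔ ∀ i, i ≠ 0 → i ≠ Fin.last (N + 1) → ∀ j, j ≠ 0 → j ≠ Fin.last (N + 1) →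
            i ≠ j → p i ≠ p j :=
        ⟨fun h i hi hi' j => h i j hi hi', fun h i j hi hi' => h i hi hi' j⟩
      _ ↔ _ := by
        simp only [forall_ne_zero_ne_last_iff, ne_eq, not_imp_not, Fin.castSucc_inj, Fin.succ_inj,
          Function.Injective]
  rw [IsAdmissible, forall_ne_zero_ne_last_iff, distinct_iff_injective]
  exact ⟨fun ⟨h_zero, h_last, h_mem, h_inj⟩ => ⟨h_zero, h_last, h_mem, h_inj⟩,
    fun ⟨h_zero, h_last, h_mem, h_inj⟩ => ⟨h_zero, h_last, h_mem, h_inj⟩⟩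

theorem pathLength_eq_chainLength {N : ℕ} (p : Fin (N + 2) → Pt) :
    pathLength N p = chainLength p :=
  Finset.sum_congr rfl fun _ _ => (dist_eq_norm' _ _).symm

theorem pathAction_eq_chainAction (s : ℝ) {N : ℕ} (p : Fin (N + 2) → Pt) :
    pathAction s N p = chainAction s p := by
  rw [pathAction, chainAction, pathLength_eq_chainLength]

theorem actionInf_eq_sInf_admissibleActions (cfg : Finset Pt) (s : ℝ) (x : Pt) (S : Set Pt) :
    actionInf cfg s x S = sInf (admissibleActions cfg s x S) := by
  simp only [actionInf, admissibleActions, isAdmissible_iff, pathAction_eq_chainAction]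

/-- If every point of `S` is within distance `d` of `S'`, then every admissible
sequence for `A^s_ω(x, S)` with `N` points and length `L` yields
`A^s_ω(x, S') ≤ (L + d)²/(2s) − N`; in particular if the infimum for `S` is attained by a
minimizer of length `L` then `A^s_ω(x, S') ≤ A^s_ω(x, S) + (2 L d + d²)/(2 s)`. -/
theorem action_target_stability (s : ℝ) (hs : 0 < s) (x : Pt) (S S' : Set Pt)
    (hS : S.Nonempty) (hS' : S'.Nonempty) (cfg : Finset Pt)
    (d : ℝ) (hd : 0 ≤ d) (hclose : ∀ z ∈ S, ∃ y ∈ S', ‖z - y‖ ≤ d) :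
    (∀ (N : ℕ) (p : Fin (N + 2) → Pt), IsAdmissible cfg x S N p →
      actionInf cfg s x S' ≤ (pathLength N p + d) ^ 2 / (2 * s) - N) ∧
    (∀ (N : ℕ) (p : Fin (N + 2) → Pt), IsAdmissible cfg x S N p →
      pathAction s N p = actionInf cfg s x S →
      actionInf cfg s x S' ≤ actionInf cfg s x S +
        (2 * pathLength N p * d + d ^ 2) / (2 * s)) := by
  simp only [← dist_eq_norm] at hclose
  simpa only [isAdmissible_iff, pathLength_eq_chainLength, pathAction_eq_chainAction,
    actionInf_eq_sInf_admissibleActions] using action_target_stability_general hs hclose
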